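/- Let Γ be a distance-regular graph with diameter 3, n vertices, and eigenvalues k > θ₁ > θ₂ > θ₃ with multiplicities 1, m₁, m₂, m₃. If n ≥ (m₁+1)(m₁+2)/2, then q²₁₁ = 0 or q³₁₁ = 0, and hence Γ is Q-polynomial with respect to θ₁. -/

import Mathlib

open Finset SimpleGraph

/-- `G` is a distance-regular graph with diameter `D` and intersection numbers
`b i`, `c i`, `a i` (so valency `k = b 0` and `a i = k - b i - c i`). -/
structure IsDRG {V : Type*} [Fintype V] (G : SimpleGraph V) (D : ℕ)
    (b c a : ℕ → ℕ) : Prop where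
  connected : G.Connected
  le_diam : ∀ x y : V, G.dist x y ≤ D
  exists_diam : ∃ x y : V, G.dist x y = D
  card_b : ∀ i, i ≤ D → ∀ x y : V, G.dist x y = i →
      Nat.card {z : V | G.Adj y z ∧ G.dist x z = i + 1} = b i
  card_c : ∀ i, i ≤ D → ∀ x y : V, G.dist x y = i →
      Nat.card {z : V | G.Adj y z ∧ G.dist x z = i - 1} = c i
  card_a : ∀ i, i ≤ D → ∀ x y : V, G.dist x y = i →
      Nat.card {z : V | G.Adj y z ∧ G.dist x z = i} = a i

/-- `θ` is an eigenvalue of the adjacency matrix of `G`. -/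
def IsEig {V : Type*} [Fintype V] [DecidableEq V] (G : SimpleGraph V)
    [DecidableRel G.Adj] (θ : ℝ) : Prop :=
  ∃ v : V → ℝ, v ≠ 0 ∧ (G.adjMatrix ℝ).mulVec v = θ • v

/-- `θ` is the second largest eigenvalue of `G` (`k` being the largest). -/
def IsSecondLargestEig {V : Type*} [Fintype V] [DecidableEq V] (G : SimpleGraph V)
    [DecidableRel G.Adj] (k θ : ℝ) : Prop :=
  IsEig G θ ∧ θ < k ∧ ∀ η : ℝ, IsEig G η → η ≠ k → η ≤ θ

/-- `θ` is the smallest eigenvalue of `G`. -/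
def IsSmallestEig {V : Type*} [Fintype V] [DecidableEq V] (G : SimpleGraph V)
    [DecidableRel G.Adj] (θ : ℝ) : Prop :=
  IsEig G θ ∧ ∀ η : ℝ, IsEig G η → θ ≤ η

/-- The multiplicity of `θ` as an eigenvalue of the adjacency matrix of `G`. -/
noncomputable def eigMult {V : Type*} [Fintype V] [DecidableEq V] (G : SimpleGraph V)
    [DecidableRel G.Adj] (θ : ℝ) : ℕ :=
  Module.finrank ℝ ↥(Module.End.eigenspace (Matrix.toLin' (G.adjMatrix ℝ)) θ)

/-- The standard sequence `u₀, u₁, u₂, u₃` associated to the eigenvalue `θ` of a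
distance-regular graph of diameter `3` with intersection numbers `b, c, a`. -/
noncomputable def stdSeq (b c a : ℕ → ℕ) (θ : ℝ) : ℕ → ℝ := fun l =>
  match l with
  | 0 => 1
  | 1 => θ / b 0
  | 2 => ((θ - a 1) * (θ / b 0) - c 1) / b 1
  | 3 => ((θ - a 2) * (((θ - a 1) * (θ / b 0) - c 1) / b 1) - c 2 * (θ / b 0)) / b 2
  | _ => 0

/-- The number `k_l` of vertices at distance `l` from a fixed vertex, for a
distance-regular graph of diameter `3`. -/
noncomputable def kdist (b c : ℕ → ℕ) : ℕ → ℝ := fun l =>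
  match l with
  | 0 => 1
  | 1 => b 0
  | 2 => b 0 * b 1 / c 2
  | 3 => b 0 * b 1 * b 2 / (c 2 * c 3)
  | _ => 0

/-- The Krein parameter `q^i_{11}` of a distance-regular graph of diameter `3` with `n`
vertices, where `m1` is the multiplicity of `θ1` and `θi` is the `i`-th eigenvalue:
`q^i_{11} = (m1 * m1 / n) * Σ_l k_l u_l(θ1)^2 u_l(θi)`. -/
noncomputable def krein11 (n m1 : ℕ) (b c a : ℕ → ℕ) (θ1 θi : ℝ) : ℝ :=
  ((m1 : ℝ) * m1 / n) *
    ∑ l ∈ Finset.range 4, kdist b c l * (stdSeq b c a θ1 l) ^ 2 * stdSeq b c a θi l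

/-- For a distance-regular graph of diameter `3` with eigenvalues
`k > θ1 > θ2 > θ3`, being `Q`-polynomial with respect to `θ1` is equivalent to
`q²₁₁ = 0` or `q³₁₁ = 0`. -/
def IsQPolyTheta1 (n m1 : ℕ) (b c a : ℕ → ℕ) (θ1 θ2 θ3 : ℝ) : Prop :=
  krein11 n m1 b c a θ1 θ2 = 0 ∨ krein11 n m1 b c a θ1 θ3 = 0

lemma SimpleGraph.Connected.exists_adj_dist_eq {V : Type*} {G : SimpleGraph V}
    (hc : G.Connected) {x y : V} {i : ℕ}
    (h : G.dist x y = i + 1) : ∃ z, G.Adj y z ∧ G.dist x z = i := by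
  obtain ⟨w, hw⟩ := hc.exists_walk_length_eq_dist y x
  rw [SimpleGraph.dist_comm, h] at hw
  cases w with
  | nil => simp at hw
  | cons hadj p =>
    rename_i z
    refine ⟨z, hadj, ?_⟩
    have h1 := SimpleGraph.dist_le p
    have h2 := hadj.diff_dist_adj (G := G) (u := x)
    rw [SimpleGraph.Walk.length_cons] at hw
    rw [SimpleGraph.dist_comm] at h1
    omega

namespace IsDRG

variable {V : Type*} [Fintype V] {G : SimpleGraph V} {b c a : ℕ → ℕ} {D : ℕ}

lemma exists_dist_eq (hG : IsDRG G D b c a) {i : ℕ} (hi : i ≤ D) :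
    ∃ x y : V, G.dist x y = i := by
  induction hi using Nat.decreasingInduction with
  | self => exact hG.exists_diam
  | of_succ i _ ih =>
    obtain ⟨x, y, h⟩ := ih
    obtain ⟨z, _, hz⟩ := hG.connected.exists_adj_dist_eq h
    exact ⟨x, z, hz⟩

lemma c_pos (hG : IsDRG G D b c a) {i : ℕ} (hi : i + 1 ≤ D) : 0 < c (i + 1) := by
  obtain ⟨x, y, h⟩ := hG.exists_dist_eq hi
  obtain ⟨z, hz, hd⟩ := hG.connected.exists_adj_dist_eq h
  rw [← hG.card_c (i + 1) hi x y h]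
  have : Nonempty {z : V | G.Adj y z ∧ G.dist x z = i + 1 - 1} := ⟨⟨z, hz, hd⟩⟩
  exact Nat.card_pos

lemma b_pos (hG : IsDRG G D b c a) {i : ℕ} (hi : i + 1 ≤ D) : 0 < b i := by
  obtain ⟨x, y, h⟩ := hG.exists_dist_eq hi
  obtain ⟨z, hz, hd⟩ := hG.connected.exists_adj_dist_eq h
  rw [← hG.card_b i (by omega) x z hd]
  have : Nonempty {w : V | G.Adj z w ∧ G.dist x w = i + 1} := ⟨⟨y, hz.symm, h⟩⟩
  exact Nat.card_pos

lemma c_one (hG : IsDRG G D b c a) (hD : 1 ≤ D) : c 1 = 1 := by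
  obtain ⟨x, y, h⟩ := hG.exists_dist_eq hD
  rw [← hG.card_c 1 hD x y h, Nat.card_eq_one_iff_unique]
  have hz : ∀ z, G.dist x z = 1 - 1 → z = x := fun z hz =>
    ((hG.connected.dist_eq_zero_iff).1 hz).symm
  refine ⟨⟨fun u v => Subtype.ext ?_⟩, ⟨⟨x, ?_, by simp⟩⟩⟩
  · rw [hz _ u.2.2, hz _ v.2.2]
  · exact (SimpleGraph.dist_eq_one_iff_adj.1 h).symm

/-- The action of the intersection matrix on functions of the distance. -/
def lap (b c a : ℕ → ℕ) (f : ℕ → ℝ) (i : ℕ) : ℝ :=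
  if i = 0 then b 0 * f 1 else b i * f (i + 1) + a i * f i + c i * f (i - 1)

/-- Sums over spheres of an eigenvector. -/
noncomputable def sphereSum (G : SimpleGraph V) (v : V → ℝ) (x : V) (l : ℕ) : ℝ :=
  ∑ y, if G.dist x y = l then v y else 0

lemma sum_dist_mul (hG : IsDRG G D b c a) (f : ℕ → ℝ) (v : V → ℝ) (x : V) :
    ∑ y, f (G.dist x y) * v y = ∑ l ∈ Finset.range (D + 1), f l * sphereSum G v x l := by
  simp only [sphereSum, Finset.mul_sum]
  rw [Finset.sum_comm]
  refine Finset.sum_congr rfl fun y _ => ?_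
  have := hG.le_diam x y
  simp only [mul_ite, mul_zero]
  rw [Finset.sum_ite_eq, if_pos (Finset.mem_range.2 (by omega))]

lemma sphereSum_zero (hG : IsDRG G D b c a) (v : V → ℝ) (x : V) : sphereSum G v x 0 = v x := by
  classical
  simp [sphereSum, hG.connected.dist_eq_zero_iff]

variable [DecidableRel G.Adj]

lemma sum_neighbor (hG : IsDRG G D b c a) (f : ℕ → ℝ) (x y : V) :
    ∑ z ∈ G.neighborFinset y, f (G.dist x z) = lap b c a f (G.dist x y) := by
  classical
  have hcard : ∀ j : ℕ, ((G.neighborFinset y).filter (fun z => G.dist x z = j)).card =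
      Nat.card {z : V | G.Adj y z ∧ G.dist x z = j} := by
    intro j
    rw [Nat.card_coe_set_eq, ← Set.ncard_coe_finset]
    congr 1
    ext z
    simp
  have hterm : ∀ j : ℕ, ∑ z ∈ G.neighborFinset y, (if G.dist x z = j then f j else 0) =
      (Nat.card {z : V | G.Adj y z ∧ G.dist x z = j} : ℝ) * f j := by
    intro j
    rw [← hcard, ← Finset.sum_filter, Finset.sum_const, nsmul_eq_mul]
  have hle := hG.le_diam x y
  unfold lap
  split_ifs with h0
  · rw [← hG.card_b 0 (Nat.zero_le _) x y h0, ← hterm]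
    refine Finset.sum_congr rfl fun z hz => ?_
    have hadj : G.Adj y z := by simpa using hz
    have hxy : x = y := hG.connected.dist_eq_zero_iff.1 h0
    have : G.dist x z = 1 := SimpleGraph.dist_eq_one_iff_adj.2 (hxy ▸ hadj)
    simp [this]
  · rw [← hG.card_b _ hle x y rfl, ← hG.card_a _ hle x y rfl, ← hG.card_c _ hle x y rfl,
      ← hterm, ← hterm, ← hterm, ← Finset.sum_add_distrib, ← Finset.sum_add_distrib]
    refine Finset.sum_congr rfl fun z hz => ?_
    have hadj : G.Adj y z := by simpa using hz
    have h2 := hadj.diff_dist_adj (G := G) (u := x)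
    have hpos : 0 < G.dist x y := Nat.pos_of_ne_zero h0
    obtain h | h | h : G.dist x z = G.dist x y ∨ G.dist x z = G.dist x y + 1 ∨
        G.dist x z = G.dist x y - 1 := by omega
    · rw [if_neg (by omega), if_pos h, if_neg (by omega), h]; ring
    · rw [if_pos h, if_neg (by omega), if_neg (by omega), h]; ring
    · rw [if_neg (by omega), if_neg (by omega), if_pos h, h]; ring

lemma sum_lap_dist_mul (hG : IsDRG G D b c a) (f : ℕ → ℝ) {θ : ℝ} {v : V → ℝ}
    (hv : (G.adjMatrix ℝ).mulVec v = θ • v) (x : V) :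
    ∑ y, lap b c a f (G.dist x y) * v y = θ * ∑ y, f (G.dist x y) * v y := by
  have hθ : ∀ y, θ * v y = ∑ z ∈ G.neighborFinset y, v z := by
    intro y
    rw [← G.adjMatrix_mulVec_apply y v, hv]
    rfl
  rw [Finset.mul_sum]
  calc ∑ y, lap b c a f (G.dist x y) * v y
      = ∑ y, ∑ z, if G.Adj y z then f (G.dist x z) * v y else 0 := by
        refine Finset.sum_congr rfl fun y _ => ?_
        rw [← hG.sum_neighbor, Finset.sum_mul, ← Finset.sum_filter,
          SimpleGraph.neighborFinset_eq_filter]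
    _ = ∑ z, ∑ y, if G.Adj z y then f (G.dist x z) * v y else 0 := by
        rw [Finset.sum_comm]
        simp only [G.adj_comm]
    _ = _ := by
        refine Finset.sum_congr rfl fun z _ => ?_
        rw [← Finset.sum_filter, ← SimpleGraph.neighborFinset_eq_filter, mul_left_comm, hθ,
          Finset.mul_sum]

lemma sum_range_lap (hG : IsDRG G 3 b c a) (f : ℕ → ℝ) {θ : ℝ} {v : V → ℝ}
    (hv : (G.adjMatrix ℝ).mulVec v = θ • v) (x : V) :
    ∑ l ∈ Finset.range 4, lap b c a f l * sphereSum G v x l =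
      θ * ∑ l ∈ Finset.range 4, f l * sphereSum G v x l := by
  have h := hG.sum_lap_dist_mul f hv x
  rwa [hG.sum_dist_mul, hG.sum_dist_mul] at h

lemma sphereSum_eq (hG : IsDRG G 3 b c a) {θ : ℝ} {v : V → ℝ}
    (hv : (G.adjMatrix ℝ).mulVec v = θ • v) (x : V) {l : ℕ} (hl : l < 4) :
    sphereSum G v x l = kdist b c l * stdSeq b c a θ l * v x := by
  have hb0 : (b 0 : ℝ) ≠ 0 := Nat.cast_ne_zero.2 (hG.b_pos (by norm_num)).ne'
  have hb1 : (b 1 : ℝ) ≠ 0 := Nat.cast_ne_zero.2 (hG.b_pos (by norm_num)).ne'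
  have hb2 : (b 2 : ℝ) ≠ 0 := Nat.cast_ne_zero.2 (hG.b_pos (by norm_num)).ne'
  have hc2 : (c 2 : ℝ) ≠ 0 := Nat.cast_ne_zero.2 (hG.c_pos (i := 1) (by norm_num)).ne'
  have hc3 : (c 3 : ℝ) ≠ 0 := Nat.cast_ne_zero.2 (hG.c_pos (i := 2) (by norm_num)).ne'
  have hc1 : (c 1 : ℝ) = 1 := by exact_mod_cast hG.c_one (by norm_num)
  have e0 := hG.sum_range_lap (fun j => if j = 0 then 1 else 0) hv x
  have e1 := hG.sum_range_lap (fun j => if j = 1 then 1 else 0) hv x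
  have e2 := hG.sum_range_lap (fun j => if j = 2 then 1 else 0) hv x
  simp [Finset.sum_range_succ, lap, hc1] at e0 e1 e2
  have w0 := hG.sphereSum_zero v x
  have w1 : sphereSum G v x 1 = kdist b c 1 * stdSeq b c a θ 1 * v x := by
    simp only [kdist, stdSeq]
    field_simp
    rw [e0, w0]
  have w2 : sphereSum G v x 2 = kdist b c 2 * stdSeq b c a θ 2 * v x := by
    simp only [kdist, stdSeq] at w1 ⊢
    rw [w0, w1] at e1
    field_simp at e1 ⊢
    rw [hc1]
    linear_combination e1
  have w3 : sphereSum G v x 3 = kdist b c 3 * stdSeq b c a θ 3 * v x := by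
    simp only [kdist, stdSeq] at w1 w2 ⊢
    rw [w1, w2] at e2
    field_simp at e2 ⊢
    linear_combination e2
  interval_cases l
  · simp [kdist, stdSeq, w0]
  · exact w1
  · exact w2
  · exact w3

lemma adjMatrix_mulVec_one (hG : IsDRG G 3 b c a) :
    (G.adjMatrix ℝ).mulVec (fun _ => 1) = (b 0 : ℝ) • fun _ => (1 : ℝ) := by
  ext x
  have h := hG.sum_neighbor (fun _ => 1) x x
  rw [SimpleGraph.adjMatrix_mulVec_apply, h]
  simp [lap]

/-- The matrix with entries the squares of the standard sequence at the distances. -/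
noncomputable def sqMatrix (G : SimpleGraph V) (b c a : ℕ → ℕ) (θ : ℝ) : Matrix V V ℝ :=
  Matrix.of fun x y => stdSeq b c a θ (G.dist x y) ^ 2

/-- The eigenvalue of `sqMatrix` on the eigenspace of `η`. -/
noncomputable def sqEig (b c a : ℕ → ℕ) (θ η : ℝ) : ℝ :=
  ∑ l ∈ Finset.range 4, kdist b c l * (stdSeq b c a θ l) ^ 2 * stdSeq b c a η l

lemma sqMatrix_mulVec (hG : IsDRG G 3 b c a) (θ : ℝ) {η : ℝ} {v : V → ℝ}
    (hv : (G.adjMatrix ℝ).mulVec v = η • v) :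
    (sqMatrix G b c a θ).mulVec v = sqEig b c a θ η • v := by
  ext x
  have h := hG.sum_dist_mul (fun l => stdSeq b c a θ l ^ 2) v x
  simp only [Matrix.mulVec, dotProduct, sqMatrix, Matrix.of_apply, Pi.smul_apply, smul_eq_mul,
    sqEig, Finset.sum_mul]
  rw [h]
  refine Finset.sum_congr rfl fun l hl => ?_
  rw [hG.sphereSum_eq hv x (Finset.mem_range.1 hl)]
  ring

lemma sqEig_valency_pos (hG : IsDRG G 3 b c a) (θ : ℝ) : 0 < sqEig b c a θ (b 0) := by
  obtain ⟨x, -, -⟩ := hG.exists_diam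
  have h := congrFun (hG.sqMatrix_mulVec θ hG.adjMatrix_mulVec_one) x
  simp only [Matrix.mulVec, dotProduct, sqMatrix, Matrix.of_apply, Pi.smul_apply, smul_eq_mul,
    mul_one] at h
  rw [← h]
  refine Finset.sum_pos' (fun y _ => sq_nonneg _) ⟨x, Finset.mem_univ _, ?_⟩
  simp [stdSeq]

variable [DecidableEq V]

lemma lap_stdSeq (hG : IsDRG G 3 b c a) {θ : ℝ} (hθ : IsEig G θ) {i : ℕ} (hi : i ≤ 3) :
    lap b c a (stdSeq b c a θ) i = θ * stdSeq b c a θ i := by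
  have hb0 : (b 0 : ℝ) ≠ 0 := Nat.cast_ne_zero.2 (hG.b_pos (by norm_num)).ne'
  have hb1 : (b 1 : ℝ) ≠ 0 := Nat.cast_ne_zero.2 (hG.b_pos (by norm_num)).ne'
  have hb2 : (b 2 : ℝ) ≠ 0 := Nat.cast_ne_zero.2 (hG.b_pos (by norm_num)).ne'
  have hc2 : (c 2 : ℝ) ≠ 0 := Nat.cast_ne_zero.2 (hG.c_pos (i := 1) (by norm_num)).ne'
  have hc3 : (c 3 : ℝ) ≠ 0 := Nat.cast_ne_zero.2 (hG.c_pos (i := 2) (by norm_num)).ne'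
  obtain rfl | rfl | rfl | rfl : i = 0 ∨ i = 1 ∨ i = 2 ∨ i = 3 := by omega
  · simp only [lap, stdSeq]
    field_simp
    simp
  · simp [lap, stdSeq]
    field_simp
    ring
  · simp [lap, stdSeq]
    field_simp
    ring
  · obtain ⟨v, hv0, hv⟩ := hθ
    obtain ⟨x, hx⟩ := Function.ne_iff.1 hv0
    have hx : v x ≠ 0 := hx
    have e3 := hG.sum_range_lap (fun j => if j = 3 then 1 else 0) hv x
    simp [Finset.sum_range_succ, lap] at e3
    rw [hG.sphereSum_eq hv x (by norm_num : 2 < 4),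
      hG.sphereSum_eq hv x (by norm_num : 3 < 4)] at e3
    have hk : kdist b c 2 * b 2 = kdist b c 3 * c 3 := by
      simp only [kdist]
      field_simp
    have hk3 : kdist b c 3 ≠ 0 := by
      simp only [kdist]
      positivity
    have h4 : stdSeq b c a θ 4 = 0 := rfl
    simp only [lap, h4]
    simp only [OfNat.ofNat_ne_zero, if_false, Nat.reduceSub, mul_zero, zero_add]
    refine mul_left_cancel₀ (mul_ne_zero hk3 hx) ?_
    linear_combination e3 - stdSeq b c a θ 2 * v x * hk

lemma stdSeq_mem_eigenspace (hG : IsDRG G 3 b c a) {θ : ℝ} (hθ : IsEig G θ) (x : V) :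
    (fun y => stdSeq b c a θ (G.dist x y)) ∈
      Module.End.eigenspace (Matrix.toLin' (G.adjMatrix ℝ)) θ := by
  rw [Module.End.mem_eigenspace_iff, Matrix.toLin'_apply]
  ext y
  rw [SimpleGraph.adjMatrix_mulVec_apply, hG.sum_neighbor, hG.lap_stdSeq hθ (hG.le_diam x y)]
  rfl

lemma rank_sqMatrix_le (hG : IsDRG G 3 b c a) {θ : ℝ} (hθ : IsEig G θ) :
    Module.finrank ℝ (LinearMap.range (Matrix.toLin' (sqMatrix G b c a θ))) ≤
      (eigMult G θ + 1).choose 2 := by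
  let W := Module.End.eigenspace (Matrix.toLin' (G.adjMatrix ℝ)) θ
  let β := Module.finBasis ℝ W
  let g : Sym2 (Fin (eigMult G θ)) → V → ℝ :=
    Sym2.lift ⟨fun i j => (β i : V → ℝ) * (β j : V → ℝ), fun i j => mul_comm _ _⟩
  have hsq : ∀ w : W, (w : V → ℝ) * w ∈ Submodule.span ℝ (Set.range g) := by
    intro w
    have hw : (w : V → ℝ) = ∑ i, β.repr w i • (β i : V → ℝ) := by
      have h := (congrArg W.subtype (β.sum_repr w)).symm
      rwa [map_sum] at h
    rw [hw, Finset.sum_mul_sum]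
    refine Submodule.sum_mem _ fun i _ => Submodule.sum_mem _ fun j _ => ?_
    rw [smul_mul_smul_comm]
    exact Submodule.smul_mem _ _ (Submodule.subset_span ⟨s(i, j), rfl⟩)
  have hle : LinearMap.range (Matrix.toLin' (sqMatrix G b c a θ)) ≤
      Submodule.span ℝ (Set.range g) := by
    rintro _ ⟨v, rfl⟩
    rw [Matrix.toLin'_apply, Matrix.mulVec_eq_sum]
    refine Submodule.sum_mem _ fun y _ => ?_
    rw [op_smul_eq_smul]
    refine Submodule.smul_mem _ _ ?_
    convert hsq ⟨_, hG.stdSeq_mem_eigenspace hθ y⟩ using 1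
    ext x
    simp [sqMatrix, sq, SimpleGraph.dist_comm]
  refine (Submodule.finrank_mono hle).trans ((finrank_range_le_card g).trans ?_)
  rw [Sym2.card, Fintype.card_fin]

end IsDRG

lemma Matrix.IsHermitian.eq_top_of_eigenvectors_mem {V : Type*} [Fintype V] [DecidableEq V]
    {A : Matrix V V ℝ} (hA : A.IsHermitian) (S : Submodule ℝ (V → ℝ))
    (hS : ∀ (η : ℝ) (v : V → ℝ), v ≠ 0 → A.mulVec v = η • v → v ∈ S) : S = ⊤ := by
  let β := hA.eigenvectorBasis.toBasis.map (WithLp.linearEquiv 2 ℝ (V → ℝ))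
  rw [eq_top_iff, ← β.span_eq, Submodule.span_le]
  rintro _ ⟨j, rfl⟩
  refine hS (hA.eigenvalues j) _ (β.ne_zero j) ?_
  simpa [β] using hA.mulVec_eigenvectorBasis j

/-- If a distance-regular graph of diameter `3` with `n` vertices satisfies
`n ≥ (m₁+1)(m₁+2)/2`, then `q²₁₁ = 0` or `q³₁₁ = 0`, i.e. `Γ` is `Q`-polynomial with
respect to `θ₁`. -/
theorem stmt13 {V : Type*} [Fintype V] [DecidableEq V] (G : SimpleGraph V)
    [DecidableRel G.Adj] (b c a : ℕ → ℕ) (hG : IsDRG G 3 b c a)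
    (θ1 θ2 θ3 : ℝ) (h1 : IsEig G θ1) (h2 : IsEig G θ2) (h3 : IsEig G θ3)
    (h32 : θ3 < θ2) (h21 : θ2 < θ1) (h1k : θ1 < (b 0 : ℝ))
    (hall : ∀ θ : ℝ, IsEig G θ → θ = (b 0 : ℝ) ∨ θ = θ1 ∨ θ = θ2 ∨ θ = θ3)
    (n : ℕ) (hn : Fintype.card V = n) (m1 : ℕ) (hm1 : eigMult G θ1 = m1)
    (hbound : (m1 + 1) * (m1 + 2) ≤ 2 * n) :
    IsQPolyTheta1 n m1 b c a θ1 θ2 θ3 := by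
  classical
  have key : ∀ η, krein11 n m1 b c a θ1 η ≠ 0 → IsDRG.sqEig b c a θ1 η ≠ 0 := by
    intro η h h0
    refine h ?_
    unfold IsDRG.sqEig at h0
    rw [krein11, h0, mul_zero]
  unfold IsQPolyTheta1
  by_contra! hne
  have hS := (G.isHermitian_adjMatrix ℝ).eq_top_of_eigenvectors_mem
    (LinearMap.range (Matrix.toLin' (IsDRG.sqMatrix G b c a θ1)) ⊔
      Module.End.eigenspace (Matrix.toLin' (G.adjMatrix ℝ)) θ1) (by
    intro η v hv0 hv
    by_cases hη : η = θ1
    · refine Submodule.mem_sup_right ?_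
      rw [Module.End.mem_eigenspace_iff, Matrix.toLin'_apply, hv, hη]
    · refine Submodule.mem_sup_left ?_
      have hsq : IsDRG.sqEig b c a θ1 η ≠ 0 := by
        rcases hall η ⟨v, hv0, hv⟩ with h | h | h | h
        · exact h ▸ (hG.sqEig_valency_pos θ1).ne'
        · exact absurd h hη
        · exact h ▸ key θ2 hne.1
        · exact h ▸ key θ3 hne.2
      refine ⟨(IsDRG.sqEig b c a θ1 η)⁻¹ • v, ?_⟩
      rw [map_smul, Matrix.toLin'_apply, hG.sqMatrix_mulVec θ1 hv, inv_smul_smul₀ hsq])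
  have hdim := Submodule.finrank_add_le_finrank_add_finrank
    (LinearMap.range (Matrix.toLin' (IsDRG.sqMatrix G b c a θ1)))
    (Module.End.eigenspace (Matrix.toLin' (G.adjMatrix ℝ)) θ1)
  rw [hS, finrank_top, Module.finrank_fintype_fun_eq_card, hn] at hdim
  have hrank := hG.rank_sqMatrix_le h1
  have hmult : Module.finrank ℝ
      (Module.End.eigenspace (Matrix.toLin' (G.adjMatrix ℝ)) θ1) = m1 := hm1
  rw [hm1, Nat.choose_two_right, Nat.add_sub_cancel] at hrank
  rw [hmult] at hdim
  have hdiv := Nat.div_mul_le_self ((m1 + 1) * m1) 2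
  nlinarith
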